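/- Fix integers k > 2, m with 1 ≤ m ≤ k−1, and n = k−m, and assign weight k to the variables a and y and weight 1 to b and x. Let F_ℓ(a,b,x) = a + b^m x^n + Σ_{j=m+1}^{k−1} γ_j b^j x^{k−j} + Σ_{ν=k+1}^{ℓ} P_ν(a,b,x), where ℓ > k, γ_j ∈ ℝ, and each P_ν is weighted homogeneous of weight ν. Then there exists a polynomial change of coordinates of the triangular form X = x + ξ(x,y), Y = y + η(x,y), A = a + α(a,b), B = b + β(a,b) (with ξ, η, α, β polynomials without constant or linear terms in the weighted sense) such that the weighted ℓ-jet of the defining function of the transformed hypersurface is a + b^m x^n + Σ_{j=m+1}^{k−1} γ_j b^j x^{k−j} + Σ_{ν=k+1}^{ℓ} P*_ν, where for every k < ν ≤ ℓ the weighted homogeneous polynomial P*_ν contains no monomials of the following types: a^i x^j and a^i b^j (with ki+j = ν); a^i b^m x^{n−1+j} and a^i b^{m−1+j} x^n (with k(i+1)+j−1 = ν); a^i b^{2m} x^{2n} (with k(i+2) = ν) and a^i b^{3m} x^{3n} (with k(i+3) = ν); a^i b x^{2n} if m = 1; and a^i b^{2m} x if n = 1. -/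

import Mathlib

/- Normal form for weighted ℓ-jets in the singular (finite type k > 2) case.
   Variables of `MvPolynomial (Fin 3) ℝ` are (a,b,x) (indices 0,1,2) with
   weights a ↦ k, b ↦ 1, x ↦ 1; polynomials in (x,y) have weights x ↦ 1,
   y ↦ k; polynomials in (a,b) have weights a ↦ k, b ↦ 1. -/

open MvPolynomial

/-- the monomial types excluded by the singular normal form w.r.t. `b^m x^n`:
`a^i x^j`, `a^i b^j`, `a^i b^m x^{n-1+j}`, `a^i b^{m-1+j} x^n`,
`a^i b^{2m} x^{2n}`, `a^i b^{3m} x^{3n}`, `a^i b x^{2n}` (if m = 1),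
`a^i b^{2m} x` (if n = 1). -/
def SingNonNormal (m n : ℕ) (d : Fin 3 →₀ ℕ) : Prop :=
  d 1 = 0 ∨ d 2 = 0 ∨
  (d 1 = m ∧ n - 1 ≤ d 2) ∨ (d 2 = n ∧ m - 1 ≤ d 1) ∨
  (d 1 = 2 * m ∧ d 2 = 2 * n) ∨ (d 1 = 3 * m ∧ d 2 = 3 * n) ∨
  (m = 1 ∧ d 1 = 1 ∧ d 2 = 2 * n) ∨ (n = 1 ∧ d 1 = 2 * m ∧ d 2 = 1)

open MvPolynomial

/-- polynomials all of whose monomials have `ω`-weight at least `r` -/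
noncomputable def OO {σ : Type} (ω : σ → ℤ) (r : ℤ) : Submodule ℝ (MvPolynomial σ ℝ) :=
  restrictSupport ℝ {d | r ≤ Finsupp.weight ω d}

section basics
variable {σ τ : Type} {ω : σ → ℤ} {ω' : τ → ℤ}

lemma OO_mem {r : ℤ} {p : MvPolynomial σ ℝ} :
    p ∈ OO ω r ↔ ∀ d ∈ p.support, r ≤ Finsupp.weight ω d := by
  unfold OO
  rw [mem_restrictSupport_iff]
  rfl

lemma OO_mono {r s : ℤ} (h : s ≤ r) {p : MvPolynomial σ ℝ} (hp : p ∈ OO ω r) : p ∈ OO ω s := by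
  rw [OO_mem] at *
  exact fun d hd => h.trans (hp d hd)

lemma OO_monomial (d : σ →₀ ℕ) (c : ℝ) {r : ℤ} (h : r ≤ Finsupp.weight ω d) :
    monomial d c ∈ OO ω r := by
  classical
  rw [OO_mem]
  intro e he
  have := support_monomial_subset he
  rw [Finset.mem_singleton] at this
  rwa [this]

lemma OO_C (c : ℝ) : (C c : MvPolynomial σ ℝ) ∈ OO ω 0 :=
  OO_monomial 0 c (by simp)

lemma OO_one : (1 : MvPolynomial σ ℝ) ∈ OO ω 0 := OO_C 1

lemma OO_X (i : σ) : (X i : MvPolynomial σ ℝ) ∈ OO ω (ω i) :=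
  OO_monomial _ 1 (by simp [Finsupp.weight_apply])

lemma OO_mul {r s t : ℤ} {p q : MvPolynomial σ ℝ} (hp : p ∈ OO ω r) (hq : q ∈ OO ω s)
    (h : t ≤ r + s) : p * q ∈ OO ω t := by
  classical
  rw [OO_mem] at *
  intro d hd
  obtain ⟨e, he, f, hf, rfl⟩ := Finset.mem_add.1 (support_mul p q hd)
  rw [map_add]
  linarith [hp e he, hq f hf]

lemma OO_pow {r t : ℤ} {p : MvPolynomial σ ℝ} (hp : p ∈ OO ω r) (i : ℕ)
    (h : t ≤ i * r) : p ^ i ∈ OO ω t := by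
  refine OO_mono h ?_
  clear h
  induction i with
  | zero => simpa using OO_one
  | succ i ih => rw [pow_succ]; exact OO_mul ih hp (by push_cast; linarith)

lemma OO_aeval {r : ℤ} {p : MvPolynomial σ ℝ} (hp : p ∈ OO ω r) {u : σ → MvPolynomial τ ℝ}
    (hu : ∀ i, u i ∈ OO ω' (ω i)) : aeval u p ∈ OO ω' r := by
  have key : ∀ d : σ →₀ ℕ, aeval u (monomial d (1 : ℝ)) ∈ OO ω' (Finsupp.weight ω d) := by
    intro d
    induction d using Finsupp.induction_linear with
    | zero => simpa using OO_one
    | add f g hf hg =>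
      have : (monomial (f + g) (1 : ℝ)) = monomial f 1 * monomial g 1 := by
        rw [monomial_mul, one_mul]
      rw [this, map_mul]
      exact OO_mul hf hg (by rw [map_add])
    | single i e =>
      rw [← X_pow_eq_monomial, map_pow, aeval_X]
      exact OO_pow (hu i) e (by simp [Finsupp.weight_apply])
  rw [p.as_sum, map_sum]
  refine Submodule.sum_mem _ fun d hd => ?_
  rw [show monomial d (coeff d p) = (coeff d p) • monomial d (1 : ℝ) by
    rw [smul_monomial, smul_eq_mul, mul_one], map_smul]
  exact Submodule.smul_mem _ _ (OO_mono (OO_mem.1 hp d hd) (key d))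

lemma OO_aeval_sub {r s t : ℤ} {p : MvPolynomial σ ℝ} (hp : p ∈ OO ω r)
    {u v : σ → MvPolynomial τ ℝ}
    (hu : ∀ i, u i ∈ OO ω' (ω i)) (hv : ∀ i, v i ∈ OO ω' (ω i))
    (huv : ∀ i, u i - v i ∈ OO ω' (ω i + s)) (ht : t ≤ r + s) :
    aeval u p - aeval v p ∈ OO ω' t := by
  have mulc : ∀ (x y x' y' : MvPolynomial τ ℝ) (a b : ℤ), x ∈ OO ω' a → y' ∈ OO ω' b →
      x - x' ∈ OO ω' (a + s) → y - y' ∈ OO ω' (b + s) → x * y - x' * y' ∈ OO ω' (a + b + s) := by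
    intro x y x' y' a b hx hy hxx hyy
    have : x * y - x' * y' = x * (y - y') + (x - x') * y' := by ring
    rw [this]
    exact Submodule.add_mem _ (OO_mul hx hyy (by linarith)) (OO_mul hxx hy (by linarith))
  have key : ∀ d : σ →₀ ℕ, aeval u (monomial d (1 : ℝ)) - aeval v (monomial d (1 : ℝ))
      ∈ OO ω' (Finsupp.weight ω d + s) := by
    intro d
    induction d using Finsupp.induction_linear with
    | zero => simp
    | add f g hf hg =>
      have : (monomial (f + g) (1 : ℝ)) = monomial f 1 * monomial g 1 := by
        rw [monomial_mul, one_mul]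
      rw [this, map_mul, map_mul, map_add]
      exact mulc _ _ _ _ _ _ (OO_aeval (OO_monomial f 1 le_rfl) hu)
        (OO_aeval (OO_monomial g 1 le_rfl) hv) hf hg
    | single i e =>
      rw [← X_pow_eq_monomial, map_pow, aeval_X, map_pow, aeval_X]
      have h1 : Finsupp.weight ω (Finsupp.single i e) = e * ω i := by
        simp [Finsupp.weight_apply]
      rw [h1]
      induction e with
      | zero => simp
      | succ e ih =>
        rw [pow_succ, pow_succ]
        refine OO_mono (le_of_eq ?_) (mulc _ _ _ _ (e * ω i) (ω i) (OO_pow (hu i) e le_rfl) (hv i)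
          (ih (by simp [Finsupp.weight_apply])) (huv i))
        push_cast; ring
  rw [p.as_sum, map_sum, map_sum, ← Finset.sum_sub_distrib]
  refine Submodule.sum_mem _ fun d hd => ?_
  rw [show monomial d (coeff d p) = (coeff d p) • monomial d (1 : ℝ) by
    rw [smul_monomial, smul_eq_mul, mul_one], map_smul, map_smul, ← smul_sub]
  refine Submodule.smul_mem _ _ (OO_mono ?_ (key d))
  linarith [OO_mem.1 hp d hd]

/-- first order comparison: `u` has leading part `u₀` of weight `w`, and `u'` is `u + D` up to
higher order terms. -/
structure JJ (ω : σ → ℤ) (s w : ℤ) (u u' u₀ D : MvPolynomial σ ℝ) : Prop where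
  h0 : u₀ ∈ OO ω w
  h1 : u - u₀ ∈ OO ω (w + 1)
  h2 : D ∈ OO ω (w + s)
  h3 : u' - u - D ∈ OO ω (w + s + 1)

variable {s w w₂ : ℤ} {u u' u₀ D v v' v₀ E : MvPolynomial σ ℝ}

lemma JJ.mul (hs : 1 ≤ s) (h : JJ ω s w u u' u₀ D) (g : JJ ω s w₂ v v' v₀ E) :
    JJ ω s (w + w₂) (u * v) (u' * v') (u₀ * v₀) (u₀ * E + v₀ * D) := by
  have hu : u ∈ OO ω w := by
    simpa using Submodule.add_mem _ (OO_mono (by linarith) h.h1) h.h0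
  have hv : v ∈ OO ω w₂ := by
    simpa using Submodule.add_mem _ (OO_mono (by linarith) g.h1) g.h0
  have hu' : u' - u ∈ OO ω (w + s) := by
    simpa using Submodule.add_mem _ (OO_mono (by linarith) h.h3) h.h2
  have hv' : v' - v ∈ OO ω (w₂ + s) := by
    simpa using Submodule.add_mem _ (OO_mono (by linarith) g.h3) g.h2
  refine ⟨OO_mul h.h0 g.h0 le_rfl, ?_, ?_, ?_⟩
  · have : u * v - u₀ * v₀ = u * (v - v₀) + (u - u₀) * v₀ := by ring
    rw [this]
    exact Submodule.add_mem _ (OO_mul hu g.h1 (by linarith)) (OO_mul h.h1 g.h0 (by linarith))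
  · exact Submodule.add_mem _ (OO_mul h.h0 g.h2 (by linarith)) (OO_mul g.h0 h.h2 (by linarith))
  · have : u' * v' - u * v - (u₀ * E + v₀ * D) = (u' - u) * (v' - v) + u * (v' - v - E)
        + v * (u' - u - D) + (u - u₀) * E + (v - v₀) * D := by ring
    rw [this]
    refine Submodule.add_mem _ (Submodule.add_mem _ (Submodule.add_mem _ (Submodule.add_mem _ ?_ ?_)
      ?_) ?_) ?_
    · exact OO_mul hu' hv' (by linarith)
    · exact OO_mul hu g.h3 (by linarith)
    · exact OO_mul hv h.h3 (by linarith)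
    · exact OO_mul h.h1 g.h2 (by linarith)
    · exact OO_mul g.h1 h.h2 (by linarith)

lemma JJ.pow (hs : 1 ≤ s) (h : JJ ω s w u u' u₀ D) (i : ℕ) :
    JJ ω s (i * w) (u ^ i) (u' ^ i) (u₀ ^ i) (C (i : ℝ) * u₀ ^ (i - 1) * D) := by
  induction i with
  | zero => exact ⟨by simpa using OO_one, by simp, by simp, by simp⟩
  | succ i ih =>
    have := ih.mul hs h
    convert this using 1
    · push_cast; ring
    · rw [pow_succ]
    · rw [pow_succ]
    · rw [pow_succ]
    · rcases i with _ | i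
      · simp
      · simp only [Nat.add_sub_cancel]
        push_cast
        simp only [map_add, map_one, map_natCast]
        ring

lemma JJ.add (h : JJ ω s w u u' u₀ D) (g : JJ ω s w v v' v₀ E) :
    JJ ω s w (u + v) (u' + v') (u₀ + v₀) (D + E) := by
  refine ⟨Submodule.add_mem _ h.h0 g.h0, ?_, Submodule.add_mem _ h.h2 g.h2, ?_⟩
  · convert Submodule.add_mem _ h.h1 g.h1 using 1; ring
  · convert Submodule.add_mem _ h.h3 g.h3 using 1; ring

lemma JJ.smul (c : ℝ) (h : JJ ω s w u u' u₀ D) :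
    JJ ω s w (C c * u) (C c * u') (C c * u₀) (C c * D) := by
  simp only [← smul_eq_C_mul]
  refine ⟨Submodule.smul_mem _ _ h.h0, ?_, Submodule.smul_mem _ _ h.h2, ?_⟩
  · rw [← smul_sub]; exact Submodule.smul_mem _ _ h.h1
  · rw [← smul_sub, ← smul_sub]; exact Submodule.smul_mem _ _ h.h3

lemma JJ.sum {ι : Type} (I : Finset ι) (f f' f₀ G : ι → MvPolynomial σ ℝ)
    (h : ∀ i ∈ I, JJ ω s w (f i) (f' i) (f₀ i) (G i)) :
    JJ ω s w (∑ i ∈ I, f i) (∑ i ∈ I, f' i) (∑ i ∈ I, f₀ i) (∑ i ∈ I, G i) := by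
  classical
  induction I using Finset.induction_on with
  | empty => exact ⟨by simp, by simp, by simp, by simp⟩
  | insert i I hi ih =>
    rw [Finset.sum_insert hi, Finset.sum_insert hi, Finset.sum_insert hi, Finset.sum_insert hi]
    exact (h i (Finset.mem_insert_self _ _)).add
      (ih fun j hj => h j (Finset.mem_insert_of_mem hj))

end basics

section linear

/-- weights of `(a,b,x)` -/
def W1 (k : ℕ) : Fin 3 → ℤ := ![(k : ℤ), 1, 1]
/-- auxiliary second grading -/
def W2 (m n : ℕ) : Fin 3 → ℤ := ![0, (n : ℤ), -(m : ℤ)]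
/-- weights of `(x,y)` -/
def Wxy (k : ℕ) : Fin 2 → ℤ := ![1, (k : ℤ)]
/-- weights of `(a,b)` -/
def Wab (k : ℕ) : Fin 2 → ℤ := ![(k : ℤ), 1]

lemma weight_W1 (k : ℕ) (d : Fin 3 →₀ ℕ) : Finsupp.weight (W1 k) d = k * d 0 + d 1 + d 2 := by
  simp [Finsupp.weight_eq_sum, Fin.sum_univ_three, W1]; ring

lemma weight_W2 (m n : ℕ) (d : Fin 3 →₀ ℕ) : Finsupp.weight (W2 m n) d = n * d 1 - m * d 2 := by
  simp [Finsupp.weight_eq_sum, Fin.sum_univ_three, W2]; ring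

lemma weight_Wxy (k : ℕ) (d : Fin 2 →₀ ℕ) : Finsupp.weight (Wxy k) d = d 0 + k * d 1 := by
  simp [Finsupp.weight_eq_sum, Fin.sum_univ_two, Wxy]; ring

lemma weight_Wab (k : ℕ) (d : Fin 2 →₀ ℕ) : Finsupp.weight (Wab k) d = k * d 0 + d 1 := by
  simp [Finsupp.weight_eq_sum, Fin.sum_univ_two, Wab]; ring

/-- exponent vector -/
noncomputable def ee (i j l : ℕ) : Fin 3 →₀ ℕ :=
  Finsupp.single 0 i + Finsupp.single 1 j + Finsupp.single 2 l

lemma ee0 (i j l : ℕ) : ee i j l 0 = i := by simp [ee]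
lemma ee1 (i j l : ℕ) : ee i j l 1 = j := by simp [ee]
lemma ee2 (i j l : ℕ) : ee i j l 2 = l := by simp [ee]

/-- the monomial `a^i b^j x^l` -/
noncomputable def Mon (i j l : ℕ) : MvPolynomial (Fin 3) ℝ := X 0 ^ i * X 1 ^ j * X 2 ^ l

lemma Mon_eq (i j l : ℕ) : Mon i j l = monomial (ee i j l) 1 := by
  simp [Mon, ee, X_pow_eq_monomial, monomial_mul]

lemma Mon_W1 (k i j l : ℕ) {r : ℤ} (h : r ≤ k * i + j + l) : Mon i j l ∈ OO (W1 k) r := by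
  rw [Mon_eq]
  exact OO_monomial _ _ (by rw [weight_W1, ee0, ee1, ee2]; exact h)

lemma Mon_W2 (m n i j l : ℕ) {r : ℤ} (h : r ≤ n * j - m * l) : Mon i j l ∈ OO (W2 m n) r := by
  rw [Mon_eq]
  exact OO_monomial _ _ (by rw [weight_W2, ee1, ee2]; exact h)

/-- the leading part `Q(B,X) = B^m X^n + ∑ γ_j B^j X^(k-j)` -/
noncomputable def QQ (k m n : ℕ) (γ : ℕ → ℝ) (B Y : MvPolynomial (Fin 3) ℝ) :
    MvPolynomial (Fin 3) ℝ :=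
  B ^ m * Y ^ n + ∑ j ∈ Finset.Icc (m + 1) (k - 1), C (γ j) * B ^ j * Y ^ (k - j)

/-- `∂Q/∂b` -/
noncomputable def Qb (k m n : ℕ) (γ : ℕ → ℝ) : MvPolynomial (Fin 3) ℝ :=
  C (m : ℝ) * X 1 ^ (m - 1) * X 2 ^ n +
    ∑ j ∈ Finset.Icc (m + 1) (k - 1), C (γ j) * (C (j : ℝ) * X 1 ^ (j - 1) * X 2 ^ (k - j))

/-- `∂Q/∂x` -/
noncomputable def Qx (k m n : ℕ) (γ : ℕ → ℝ) : MvPolynomial (Fin 3) ℝ :=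
  C (n : ℝ) * X 1 ^ m * X 2 ^ (n - 1) +
    ∑ j ∈ Finset.Icc (m + 1) (k - 1),
      C (γ j) * (C ((k - j : ℕ) : ℝ) * X 1 ^ j * X 2 ^ (k - j - 1))

/-- combined filtration -/
noncomputable def DD (k m n : ℕ) (r s : ℤ) : Submodule ℝ (MvPolynomial (Fin 3) ℝ) :=
  OO (W1 k) r ⊓ OO (W2 m n) s

lemma DD_Mon (k m n i j l : ℕ) {r s : ℤ} (h : r ≤ k * i + j + l) (h' : s ≤ n * j - m * l) :
    Mon i j l ∈ DD k m n r s := ⟨Mon_W1 k i j l h, Mon_W2 m n i j l h'⟩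

lemma DD_mul {k m n : ℕ} {r s r' s' t t' : ℤ} {p q : MvPolynomial (Fin 3) ℝ}
    (hp : p ∈ DD k m n r s) (hq : q ∈ DD k m n r' s') (h : t ≤ r + r') (h' : t' ≤ s + s') :
    p * q ∈ DD k m n t t' :=
  ⟨OO_mul hp.1 hq.1 h, OO_mul hp.2 hq.2 h'⟩

lemma DD_mono {k m n : ℕ} {r s t t' : ℤ} {p : MvPolynomial (Fin 3) ℝ}
    (hp : p ∈ DD k m n r s) (h : t ≤ r) (h' : t' ≤ s) :
    p ∈ DD k m n t t' :=
  ⟨OO_mono h hp.1, OO_mono h' hp.2⟩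

variable (k m n : ℕ) (γ : ℕ → ℝ)

lemma QQ_DD (hmn : m + n = k) :
    QQ k m n γ (X 1) (X 2) - Mon 0 m n ∈ DD k m n k 1 := by
  have : QQ k m n γ (X 1) (X 2) - Mon 0 m n =
      ∑ j ∈ Finset.Icc (m + 1) (k - 1), γ j • Mon 0 j (k - j) := by
    simp [QQ, Mon, smul_eq_C_mul, mul_assoc]
  rw [this]
  refine Submodule.sum_mem _ fun j hj => Submodule.smul_mem _ _ ?_
  rw [Finset.mem_Icc] at hj
  obtain ⟨l, hl⟩ : ∃ l, k = j + l := ⟨k - j, by omega⟩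
  have h1 : k - j = l := by omega
  have h2 : (j : ℤ) + l = k := by exact_mod_cast hl.symm
  have h3 : (m : ℤ) + n = k := by exact_mod_cast hmn
  have h4 : (m : ℤ) + 1 ≤ j := by exact_mod_cast hj.1
  have h5 : (0 : ℤ) ≤ n := by positivity
  have h6 : (1 : ℤ) ≤ k := by have : 1 ≤ k := by omega
                              exact_mod_cast this
  rw [h1]
  exact DD_Mon _ _ _ _ _ _ (by push_cast; linarith) (by nlinarith)

lemma Qb_DD (hmn : m + n = k) :
    Qb k m n γ - (m : ℝ) • Mon 0 (m - 1) n ∈ DD k m n (k - 1) (1 - n) := by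
  have : Qb k m n γ - (m : ℝ) • Mon 0 (m - 1) n =
      ∑ j ∈ Finset.Icc (m + 1) (k - 1), γ j • (j : ℝ) • Mon 0 (j - 1) (k - j) := by
    simp [Qb, Mon, smul_eq_C_mul, mul_assoc]
  rw [this]
  refine Submodule.sum_mem _ fun j hj => Submodule.smul_mem _ _ (Submodule.smul_mem _ _ ?_)
  rw [Finset.mem_Icc] at hj
  obtain ⟨l, hl⟩ : ∃ l, k = j + l := ⟨k - j, by omega⟩
  have h1 : k - j = l := by omega
  have h2 : (j : ℤ) + l = k := by exact_mod_cast hl.symm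
  have h3 : (m : ℤ) + n = k := by exact_mod_cast hmn
  have h4 : (m : ℤ) + 1 ≤ j := by exact_mod_cast hj.1
  have h5 : (0 : ℤ) ≤ n := by positivity
  have h6 : (1 : ℤ) ≤ k := by have : 1 ≤ k := by omega
                              exact_mod_cast this
  have h7 : ((j - 1 : ℕ) : ℤ) = j - 1 := by have : 1 ≤ j := by omega
                                            push_cast [this]; rfl
  rw [h1]
  exact DD_Mon _ _ _ _ _ _ (by rw [h7]; push_cast; linarith) (by rw [h7]; nlinarith)

lemma Qx_DD (hmn : m + n = k) :
    Qx k m n γ - (n : ℝ) • Mon 0 m (n - 1) ∈ DD k m n (k - 1) (m + 1) := by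
  have : Qx k m n γ - (n : ℝ) • Mon 0 m (n - 1) =
      ∑ j ∈ Finset.Icc (m + 1) (k - 1), γ j • ((k - j : ℕ) : ℝ) • Mon 0 j (k - j - 1) := by
    simp [Qx, Mon, smul_eq_C_mul, mul_assoc]
  rw [this]
  refine Submodule.sum_mem _ fun j hj => Submodule.smul_mem _ _ (Submodule.smul_mem _ _ ?_)
  rw [Finset.mem_Icc] at hj
  obtain ⟨l, hl⟩ : ∃ l, k = j + (l + 1) := ⟨k - j - 1, by omega⟩
  have h1 : k - j - 1 = l := by omega
  have h2 : (j : ℤ) + (l + 1) = k := by exact_mod_cast hl.symm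
  have h3 : (m : ℤ) + n = k := by exact_mod_cast hmn
  have h4 : (m : ℤ) + 1 ≤ j := by exact_mod_cast hj.1
  have h5 : (0 : ℤ) ≤ n := by positivity
  have h6 : (1 : ℤ) ≤ k := by have : 1 ≤ k := by omega
                              exact_mod_cast this
  rw [h1]
  exact DD_Mon _ _ _ _ _ _ (by push_cast; linarith) (by nlinarith)

/-- `a + Q` -/
noncomputable def F0 : MvPolynomial (Fin 3) ℝ := X 0 + QQ k m n γ (X 1) (X 2)

lemma pow_DD {p q : MvPolynomial (Fin 3) ℝ} (hp : p ∈ DD k m n k 0) (hq : q ∈ DD k m n k 0)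
    (h : p - q ∈ DD k m n k 1) (i : ℕ) :
    p ^ i ∈ DD k m n (k * i) 0 ∧ q ^ i ∈ DD k m n (k * i) 0 ∧
      p ^ i - q ^ i ∈ DD k m n (k * i) 1 := by
  induction i with
  | zero =>
    have : (1 : MvPolynomial (Fin 3) ℝ) ∈ DD k m n 0 0 := ⟨OO_one, OO_one⟩
    simpa using this
  | succ i ih =>
    obtain ⟨h1, h2, h3⟩ := ih
    refine ⟨?_, ?_, ?_⟩
    · rw [pow_succ]; exact DD_mul h1 hp (by push_cast; linarith) (by linarith)
    · rw [pow_succ]; exact DD_mul h2 hq (by push_cast; linarith) (by linarith)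
    · have : p ^ (i + 1) - q ^ (i + 1) = p ^ i * (p - q) + (p ^ i - q ^ i) * q := by ring
      rw [this]
      exact Submodule.add_mem _ (DD_mul h1 h (by push_cast; linarith) (by linarith))
        (DD_mul h3 hq (by push_cast; linarith) (by linarith))

/-- `a + b^m x^n` -/
noncomputable def G0 : MvPolynomial (Fin 3) ℝ := Mon 0 m n + Mon 1 0 0

lemma F0_DD (hmn : m + n = k) (i : ℕ) :
    F0 k m n γ ^ i ∈ DD k m n (k * i) 0 ∧ G0 m n ^ i ∈ DD k m n (k * i) 0 ∧
      F0 k m n γ ^ i - G0 m n ^ i ∈ DD k m n (k * i) 1 := by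
  have h3 : (m : ℤ) + n = k := by exact_mod_cast hmn
  have hG : G0 m n ∈ DD k m n k 0 :=
    Submodule.add_mem _ (DD_Mon _ _ _ _ _ _ (by push_cast; linarith) (by linarith))
      (DD_Mon _ _ _ _ _ _ (by push_cast; linarith) (by push_cast; linarith))
  have hd : F0 k m n γ - G0 m n ∈ DD k m n k 1 := by
    convert QQ_DD k m n γ hmn using 1
    simp [F0, G0, Mon]
    ring
  refine pow_DD k m n ?_ hG hd i
  have := Submodule.add_mem _ (DD_mono hd le_rfl (by norm_num : (0 : ℤ) ≤ 1)) hG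
  simpa using this

lemma G0_pow (i : ℕ) : G0 m n ^ i =
    ∑ s ∈ Finset.range (i + 1), (i.choose s : ℝ) • Mon (i - s) (m * s) (n * s) := by
  rw [G0, add_pow]
  refine Finset.sum_congr rfl fun s _ => ?_
  simp only [Mon, smul_eq_C_mul, map_natCast]
  ring

/-- polynomials of order at least `N` whose part of weight `N` is in normal form -/
noncomputable def Nrm (N : ℤ) : Submodule ℝ (MvPolynomial (Fin 3) ℝ) :=
  restrictSupport ℝ {d | N ≤ Finsupp.weight (W1 k) d ∧
    (Finsupp.weight (W1 k) d = N → ¬ SingNonNormal m n d)}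

/-- image of the linearised operator plus normal forms -/
noncomputable def VV (N : ℤ) : Submodule ℝ (MvPolynomial (Fin 3) ℝ) :=
  (OO (Wxy k) N).map (aeval ![(X 2 : MvPolynomial (Fin 3) ℝ), F0 k m n γ]).toLinearMap ⊔
  (OO (Wab k) N).map (aeval ![(X 0 : MvPolynomial (Fin 3) ℝ), X 1]).toLinearMap ⊔
  (OO (Wab k) (N - k + 1)).map (LinearMap.mulLeft ℝ (Qb k m n γ) ∘ₗ
    (aeval ![(X 0 : MvPolynomial (Fin 3) ℝ), X 1]).toLinearMap) ⊔
  (OO (Wxy k) (N - k + 1)).map (LinearMap.mulLeft ℝ (Qx k m n γ) ∘ₗ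
    (aeval ![(X 2 : MvPolynomial (Fin 3) ℝ), F0 k m n γ]).toLinearMap) ⊔
  Nrm k m n N

lemma VV_mem {N : ℤ} {E : MvPolynomial (Fin 3) ℝ} (h : E ∈ VV k m n γ N) :
    ∃ η ∈ OO (Wxy k) N, ∃ α ∈ OO (Wab k) N, ∃ β ∈ OO (Wab k) (N - k + 1),
      ∃ ξ ∈ OO (Wxy k) (N - k + 1), ∃ R ∈ Nrm k m n N,
      E = aeval ![(X 2 : MvPolynomial (Fin 3) ℝ), F0 k m n γ] η +
        aeval ![(X 0 : MvPolynomial (Fin 3) ℝ), X 1] α +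
        Qb k m n γ * aeval ![(X 0 : MvPolynomial (Fin 3) ℝ), X 1] β +
        Qx k m n γ * aeval ![(X 2 : MvPolynomial (Fin 3) ℝ), F0 k m n γ] ξ + R := by
  unfold VV at h
  obtain ⟨E1, h1, R, hR, rfl⟩ := Submodule.mem_sup.1 h
  obtain ⟨E2, h2, _, ⟨ξ, hξ, rfl⟩, rfl⟩ := Submodule.mem_sup.1 h1
  obtain ⟨E3, h3, _, ⟨β, hβ, rfl⟩, rfl⟩ := Submodule.mem_sup.1 h2
  obtain ⟨_, ⟨η, hη, rfl⟩, _, ⟨α, hα, rfl⟩, rfl⟩ := Submodule.mem_sup.1 h3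
  exact ⟨η, hη, α, hα, β, hβ, ξ, hξ, R, hR, rfl⟩

variable {k m n γ}
variable {N : ℤ}

lemma pow_mem_xy (i j : ℕ) {r : ℤ} (h : r ≤ k * i + j) :
    (X 0 ^ j * X 1 ^ i : MvPolynomial (Fin 2) ℝ) ∈ OO (Wxy k) r :=
  OO_mul (OO_pow (OO_X 0) j le_rfl) (OO_pow (OO_X 1) i le_rfl)
    (by simp [Wxy]; linarith [mul_comm (k : ℤ) i])

lemma pow_mem_ab (i j : ℕ) {r : ℤ} (h : r ≤ k * i + j) :
    (X 0 ^ i * X 1 ^ j : MvPolynomial (Fin 2) ℝ) ∈ OO (Wab k) r :=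
  OO_mul (OO_pow (OO_X 0) i le_rfl) (OO_pow (OO_X 1) j le_rfl)
    (by simp [Wab]; linarith [mul_comm (k : ℤ) i])

lemma VV_eta (i j : ℕ) (h : N ≤ k * i + j) : F0 k m n γ ^ i * Mon 0 0 j ∈ VV k m n γ N := by
  unfold VV
  refine Submodule.mem_sup_left (Submodule.mem_sup_left (Submodule.mem_sup_left
    (Submodule.mem_sup_left ⟨_, pow_mem_xy i j h, ?_⟩)))
  simp [Mon, mul_comm]

lemma VV_alpha (i j : ℕ) (h : N ≤ k * i + j) : Mon i j 0 ∈ VV k m n γ N := by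
  unfold VV
  refine Submodule.mem_sup_left (Submodule.mem_sup_left (Submodule.mem_sup_left
    (Submodule.mem_sup_right ⟨_, pow_mem_ab i j h, ?_⟩)))
  simp [Mon]

lemma VV_beta (i j : ℕ) (h : N - k + 1 ≤ k * i + j) :
    Qb k m n γ * Mon i j 0 ∈ VV k m n γ N := by
  unfold VV
  refine Submodule.mem_sup_left (Submodule.mem_sup_left
    (Submodule.mem_sup_right ⟨_, pow_mem_ab i j h, ?_⟩))
  simp [Mon]

lemma VV_xi (i j : ℕ) (h : N - k + 1 ≤ k * i + j) :
    Qx k m n γ * (F0 k m n γ ^ i * Mon 0 0 j) ∈ VV k m n γ N := by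
  unfold VV
  refine Submodule.mem_sup_left 
    (Submodule.mem_sup_right ⟨_, pow_mem_xy i j h, ?_⟩)
  simp [Mon, mul_comm]

lemma VV_nrm {p} (h : p ∈ Nrm k m n N) : p ∈ VV k m n γ N := by
  unfold VV
  exact Submodule.mem_sup_right h

lemma VV_Mon_nrm (i j l : ℕ) (h : N ≤ k * i + j + l) (h' : ¬ SingNonNormal m n (ee i j l)) :
    Mon i j l ∈ VV k m n γ N := by
  refine VV_nrm ?_
  rw [Mon_eq]
  refine (monomial_mem_restrictSupport ℝ).2 (Or.inl ⟨?_, fun _ => h'⟩)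
  rw [weight_W1, ee0, ee1, ee2]; exact h

lemma sub_mem_VV {p q : MvPolynomial (Fin 3) ℝ} (hp : p ∈ VV k m n γ N)
    (h : p - q ∈ VV k m n γ N) : q ∈ VV k m n γ N := by
  simpa using Submodule.sub_mem _ hp h

lemma key_beta (hmn : m + n = k) (hm : 1 ≤ m) {w : ℤ} (H : DD k m n N (w + 1) ≤ VV k m n γ N)
    (i j t : ℕ) (hj : j + 1 = m + t) (hN : N = k * i + j + n) (hw : w = n * j - m * n) :
    Mon i j n ∈ VV k m n γ N := by
  have h3 : (m : ℤ) + n = k := by exact_mod_cast hmn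
  have hj' : (j : ℤ) + 1 = m + t := by exact_mod_cast hj
  have h1 := VV_beta (k := k) (m := m) (n := n) (γ := γ) (N := N) i t (by linarith)
  have h2 : (m : ℝ) • Mon i j n ∈ VV k m n γ N := by
    refine sub_mem_VV h1 (H ?_)
    have : Qb k m n γ * Mon i t 0 - (m : ℝ) • Mon i j n =
        (Qb k m n γ - (m : ℝ) • Mon 0 (m - 1) n) * Mon i t 0 := by
      have : j = (m - 1) + t := by omega
      rw [this]
      simp only [Mon, smul_eq_C_mul]
      ring
    rw [this]
    refine DD_mul (Qb_DD k m n γ hmn) (DD_Mon k m n i t 0 le_rfl le_rfl) ?_ ?_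
    · push_cast; linarith
    · push_cast
      have : (j : ℤ) = m + t - 1 := by linarith
      rw [hw, this]; linarith
  have hm0 : (m : ℝ) ≠ 0 := by positivity
  exact (Submodule.smul_mem_iff _ hm0).1 h2

lemma key_xi (hmn : m + n = k) (hn : 1 ≤ n) {w : ℤ} (H : DD k m n N (w + 1) ≤ VV k m n γ N)
    (i l t : ℕ) (hl : l + 1 = n + t) (hN : N = k * i + m + l) (hw : w = n * m - m * l) :
    ∑ s ∈ Finset.range (i + 1), (i.choose s : ℝ) • Mon (i - s) (m * (s + 1)) (n * s + l)
      ∈ VV k m n γ N := by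
  have h3 : (m : ℤ) + n = k := by exact_mod_cast hmn
  have hl' : (l : ℤ) + 1 = n + t := by exact_mod_cast hl
  have h1 := VV_xi (k := k) (m := m) (n := n) (γ := γ) (N := N) i t (by linarith)
  obtain ⟨hF, hG, hFG⟩ := F0_DD k m n γ hmn i
  have e1 : ∑ s ∈ Finset.range (i + 1), (i.choose s : ℝ) • Mon (i - s) (m * (s + 1)) (n * s + l)
      = Mon 0 m (n - 1) * (G0 m n ^ i * Mon 0 0 t) := by
    rw [G0_pow, Finset.sum_mul, Finset.mul_sum]
    refine Finset.sum_congr rfl fun s _ => ?_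
    have : l = (n - 1) + t := by omega
    rw [this]
    simp only [Mon, smul_eq_C_mul]
    ring
  rw [e1]
  have h2 : (n : ℝ) • (Mon 0 m (n - 1) * (G0 m n ^ i * Mon 0 0 t)) ∈ VV k m n γ N := by
    refine sub_mem_VV h1 (H ?_)
    have : Qx k m n γ * (F0 k m n γ ^ i * Mon 0 0 t) -
        (n : ℝ) • (Mon 0 m (n - 1) * (G0 m n ^ i * Mon 0 0 t)) =
        (Qx k m n γ - (n : ℝ) • Mon 0 m (n - 1)) * (F0 k m n γ ^ i * Mon 0 0 t) +
        (n : ℝ) • (Mon 0 m (n - 1) * ((F0 k m n γ ^ i - G0 m n ^ i) * Mon 0 0 t)) := by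
      simp only [smul_eq_C_mul]
      ring
    rw [this]
    have hn' : ((n - 1 : ℕ) : ℤ) = n - 1 := by push_cast [hn]; rfl
    have hle : (l : ℤ) = n + t - 1 := by linarith
    refine Submodule.add_mem _ ?_ (Submodule.smul_mem _ _ ?_)
    · refine DD_mul (Qx_DD k m n γ hmn)
        (DD_mul hF (DD_Mon k m n 0 0 t le_rfl le_rfl) le_rfl le_rfl) ?_ ?_
      · push_cast; linarith
      · push_cast
        rw [hw, hle]; linarith
    · refine DD_mul (DD_Mon k m n 0 m (n - 1) le_rfl le_rfl)
        (DD_mul hFG (DD_Mon k m n 0 0 t le_rfl le_rfl) le_rfl le_rfl) ?_ ?_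
      · rw [hn']; push_cast; linarith
      · rw [hn']; push_cast
        rw [hw, hle]; linarith
  have hm0 : (n : ℝ) ≠ 0 := by positivity
  exact (Submodule.smul_mem_iff _ hm0).1 h2

lemma key_eta (hmn : m + n = k) {w : ℤ} (H : DD k m n N (w + 1) ≤ VV k m n γ N)
    (i l : ℕ) (hN : N = k * i + l) (hw : w = - m * l) :
    ∑ s ∈ Finset.range (i + 1), (i.choose s : ℝ) • Mon (i - s) (m * s) (n * s + l)
      ∈ VV k m n γ N := by
  have h1 := VV_eta (k := k) (m := m) (n := n) (γ := γ) (N := N) i l (by linarith)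
  obtain ⟨hF, hG, hFG⟩ := F0_DD k m n γ hmn i
  have e1 : ∑ s ∈ Finset.range (i + 1), (i.choose s : ℝ) • Mon (i - s) (m * s) (n * s + l)
      = G0 m n ^ i * Mon 0 0 l := by
    rw [G0_pow, Finset.sum_mul]
    refine Finset.sum_congr rfl fun s _ => ?_
    simp only [Mon, smul_eq_C_mul]
    ring
  rw [e1]
  refine sub_mem_VV h1 (H ?_)
  rw [← sub_mul]
  refine DD_mul hFG (DD_Mon k m n 0 0 l le_rfl le_rfl) ?_ ?_
  · push_cast; linarith
  · push_cast; linarith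

lemma not_sing {j l : ℕ} (i : ℕ) (h1 : j ≠ 0) (h2 : l ≠ 0) (h3 : j ≠ m) (h4 : l ≠ n)
    (h5 : ¬ (j = 2 * m ∧ l = 2 * n)) (h6 : ¬ (j = 3 * m ∧ l = 3 * n)) :
    ¬ SingNonNormal m n (ee i j l) := by
  unfold SingNonNormal
  simp only [ee1, ee2]
  grind

/-- weight of a shifted monomial -/
lemma wt_shift (hmn : m + n = k) (i s : ℕ) (hs : s ≤ i) :
    (k : ℤ) * ((i - s : ℕ) : ℤ) + m * s + n * s = k * i := by
  have h3 : (m : ℤ) + n = k := by exact_mod_cast hmn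
  push_cast [hs]
  rw [← h3]; ring

/-- case `a^i b^m x^l`, `l ≥ n - 1`, `l ≠ n`, `l ≠ 0` -/
lemma case_m (hmn : m + n = k) (hm : 1 ≤ m) (hn : 1 ≤ n) {w : ℤ}
    (H : DD k m n N (w + 1) ≤ VV k m n γ N)
    (i l t : ℕ) (hl : l + 1 = n + t) (hln : l ≠ n) (hl0 : l ≠ 0)
    (hN : N = k * i + m + l) (hw : w = n * m - m * l) :
    Mon i m l ∈ VV k m n γ N := by
  have h := key_xi hmn hn H i l t hl hN hw
  rw [Finset.sum_range_succ'] at h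
  have h2 : ∑ s ∈ Finset.range i,
      (i.choose (s + 1) : ℝ) • Mon (i - (s + 1)) (m * (s + 1 + 1)) (n * (s + 1) + l)
      ∈ VV k m n γ N := by
    refine Submodule.sum_mem _ fun s hs => Submodule.smul_mem _ _ (VV_Mon_nrm _ _ _ ?_ ?_)
    · rw [Finset.mem_range] at hs
      have := wt_shift hmn i (s + 1) (by omega)
      push_cast at this ⊢
      linarith
    · have hms : m * s ≥ 0 := by positivity
      have hns : n * s ≥ 0 := by positivity
      refine not_sing _ (by nlinarith) (by omega) (by nlinarith) ?_ ?_ ?_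
      · intro h'
        have h0 : 0 < l := Nat.pos_of_ne_zero hl0
        nlinarith
      · rintro ⟨h5, h6⟩
        have : s = 0 := by
          have : s + 1 + 1 = 2 := Nat.eq_of_mul_eq_mul_left hm (by linarith)
          omega
        subst this
        omega
      · rintro ⟨h5, h6⟩
        have : s = 1 := by
          have : s + 1 + 1 = 3 := Nat.eq_of_mul_eq_mul_left hm (by linarith)
          omega
        subst this
        omega
  have h3 := (Submodule.add_mem_iff_right _ h2).1 h
  simpa using h3

/-- case `a^i x^l`, `l ≥ 1` -/
lemma case_x (hmn : m + n = k) (hm : 1 ≤ m) (hn : 1 ≤ n) {w : ℤ}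
    (H : DD k m n N (w + 1) ≤ VV k m n γ N)
    (i l : ℕ) (hl0 : 1 ≤ l)
    (hN : N = k * i + l) (hw : w = - m * l) :
    Mon i 0 l ∈ VV k m n γ N := by
  have h := key_eta hmn H i l hN hw
  rw [Finset.sum_range_succ'] at h
  have h2 : ∑ s ∈ Finset.range i,
      (i.choose (s + 1) : ℝ) • Mon (i - (s + 1)) (m * (s + 1)) (n * (s + 1) + l)
      ∈ VV k m n γ N := by
    refine Submodule.sum_mem _ fun s hs => Submodule.smul_mem _ _ ?_
    rw [Finset.mem_range] at hs
    have hwt := wt_shift hmn i (s + 1) (by omega)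
    rcases Nat.eq_zero_or_pos s with h0 | h0
    · subst h0
      have := case_m hmn hm hn H (i - 1) (n + l) (l + 1) (by omega) (by omega) (by omega)
        (by push_cast at hwt ⊢; linarith) (by push_cast; linarith)
      simpa using this
    · refine VV_Mon_nrm _ _ _ ?_ ?_
      · push_cast at hwt ⊢
        linarith
      · have hms : m * s ≥ m * 1 := Nat.mul_le_mul_left m h0
        have hns : n * s ≥ n * 1 := Nat.mul_le_mul_left n h0
        refine not_sing _ (by nlinarith) (by omega) (by nlinarith) (by nlinarith) ?_ ?_
        · rintro ⟨h5, h6⟩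
          have : s + 1 = 2 := Nat.eq_of_mul_eq_mul_left hm (by linarith)
          rw [this] at h6
          omega
        · rintro ⟨h5, h6⟩
          have : s + 1 = 3 := Nat.eq_of_mul_eq_mul_left hm (by linarith)
          rw [this] at h6
          omega
  have h3 := (Submodule.add_mem_iff_right _ h2).1 h
  simpa using h3

lemma tail_nrm (hmn : m + n = k) (hm : 1 ≤ m) (p s : ℕ) (hN : N = k * p) (hs : 4 ≤ s)
    (hsp : s ≤ p) (hn : 1 ≤ n) : Mon (p - s) (m * s) (n * s) ∈ VV k m n γ N := by
  refine VV_Mon_nrm _ _ _ ?_ ?_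
  · have := wt_shift hmn p s hsp
    push_cast
    linarith
  · have hms : m * s ≥ m * 4 := Nat.mul_le_mul_left m hs
    have hns : n * s ≥ n * 4 := Nat.mul_le_mul_left n hs
    exact not_sing _ (by omega) (by omega) (by omega) (by omega) (by omega) (by omega)

/-- cases `a^i b^{2m} x^{2n}` and `a^i b^{3m} x^{3n}`, where `p = i + 3` -/
lemma case_23 (hmn : m + n = k) (hm : 1 ≤ m) (hn : 1 ≤ n) {w : ℤ}
    (H : DD k m n N (w + 1) ≤ VV k m n γ N) (i : ℕ) (hN : N = k * (i + 3 : ℕ)) (hw : w = 0) :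
    Mon (i + 1) (2 * m) (2 * n) ∈ VV k m n γ N ∧ Mon i (3 * m) (3 * n) ∈ VV k m n γ N := by
  have h3 : (m : ℤ) + n = k := by exact_mod_cast hmn
  have t0 : Mon (i + 3) 0 0 ∈ VV k m n γ N := VV_alpha _ _ (by rw [hN]; push_cast; linarith)
  have t1 : Mon (i + 2) m n ∈ VV k m n γ N :=
    key_beta hmn hm H (i + 2) m 1 rfl (by rw [hN]; push_cast; linarith) (by rw [hw]; ring)
  have hx := key_xi hmn hn H (i + 2) n 1 rfl (by rw [hN]; push_cast; linarith) (by rw [hw]; ring)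
  have he := key_eta hmn H (i + 3) 0 (by rw [hN]; push_cast; linarith) (by rw [hw]; simp)
  rw [Finset.sum_range_succ', Finset.sum_range_succ', Finset.sum_range_succ'] at hx
  rw [Finset.sum_range_succ', Finset.sum_range_succ', Finset.sum_range_succ',
    Finset.sum_range_succ'] at he
  have hx2 : ∑ s ∈ Finset.range i, ((i + 2).choose (s + 1 + 1 + 1) : ℝ) •
      Mon (i + 2 - (s + 1 + 1 + 1)) (m * (s + 1 + 1 + 1 + 1)) (n * (s + 1 + 1 + 1) + n)
      ∈ VV k m n γ N := by
    refine Submodule.sum_mem _ fun s hs => Submodule.smul_mem _ _ ?_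
    rw [Finset.mem_range] at hs
    have := tail_nrm (γ := γ) hmn hm (i + 3) (s + 4) hN (by omega) (by omega) hn
    convert this using 2
    · omega
    · ring
  have he2 : ∑ s ∈ Finset.range i, ((i + 3).choose (s + 1 + 1 + 1 + 1) : ℝ) •
      Mon (i + 3 - (s + 1 + 1 + 1 + 1)) (m * (s + 1 + 1 + 1 + 1)) (n * (s + 1 + 1 + 1 + 1) + 0)
      ∈ VV k m n γ N := by
    refine Submodule.sum_mem _ fun s hs => Submodule.smul_mem _ _ ?_
    rw [Finset.mem_range] at hs
    exact tail_nrm (γ := γ) hmn hm (i + 3) (s + 4) hN (by omega) (by omega) hn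
  set T2 := Mon (i + 1) (2 * m) (2 * n) with hT2
  set T3 := Mon i (3 * m) (3 * n) with hT3
  have hx3 : ((i + 2).choose 1 : ℝ) • T2 + ((i + 2).choose 2 : ℝ) • T3 ∈ VV k m n γ N := by
    have := Submodule.sub_mem _ (Submodule.sub_mem _ hx hx2) t1
    convert this using 1
    have a1 : Mon (i + 2 - (0 + 1)) (m * (0 + 1 + 1)) (n * (0 + 1) + n) = T2 := by
      rw [hT2]; congr 1 <;> ring
    have a2 : Mon (i + 2 - (0 + 1 + 1)) (m * (0 + 1 + 1 + 1)) (n * (0 + 1 + 1) + n) = T3 := by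
      rw [hT3]; congr 1 <;> ring
    have a3 : Mon (i + 2 - 0) (m * (0 + 1)) (n * 0 + n) = Mon (i + 2) m n := by
      congr 1 <;> ring
    rw [a1, a2, a3]
    simp only [Nat.choose_zero_right, Nat.cast_one, one_smul, Nat.zero_add, Nat.reduceAdd]
    abel
  have he3 : ((i + 3).choose 2 : ℝ) • T2 + ((i + 3).choose 3 : ℝ) • T3 ∈ VV k m n γ N := by
    have := Submodule.sub_mem _ (Submodule.sub_mem _ (Submodule.sub_mem _ he he2) t0)
      (Submodule.smul_mem _ ((i + 3).choose 1 : ℝ) t1)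
    convert this using 1
    have a1 : Mon (i + 3 - (0 + 1)) (m * (0 + 1)) (n * (0 + 1) + 0) = Mon (i + 2) m n := by
      congr 1 <;> ring
    have a2 : Mon (i + 3 - (0 + 1 + 1)) (m * (0 + 1 + 1)) (n * (0 + 1 + 1) + 0) = T2 := by
      rw [hT2]; congr 1 <;> ring
    have a3 : Mon (i + 3 - (0 + 1 + 1 + 1)) (m * (0 + 1 + 1 + 1)) (n * (0 + 1 + 1 + 1) + 0)
        = T3 := by
      rw [hT3]; congr 1 <;> ring
    have a4 : Mon (i + 3 - 0) (m * 0) (n * 0 + 0) = Mon (i + 3) 0 0 := by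
      congr 1
    rw [a1, a2, a3, a4]
    simp only [Nat.choose_zero_right, Nat.cast_one, one_smul, Nat.zero_add, Nat.reduceAdd]
    abel
  have c1 : ((i + 2).choose 1 : ℝ) = i + 2 := by simp
  have c2 : ((i + 2).choose 2 : ℝ) = (i + 2) * (i + 1) / 2 := by
    rw [Nat.cast_choose_two]; push_cast; ring
  have c3 : ((i + 3).choose 2 : ℝ) = (i + 3) * (i + 2) / 2 := by
    rw [Nat.cast_choose_two]; push_cast; ring
  have c4 : ((i + 3).choose 3 : ℝ) = (i + 3) * (i + 2) * (i + 1) / 6 := by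
    have h := Nat.add_one_mul_choose_eq (i + 2) 2
    have h' : ((i : ℝ) + 2 + 1) * ((i + 2).choose 2 : ℝ) = ((i + 3).choose 3 : ℝ) * (2 + 1) := by
      exact_mod_cast h
    rw [c2] at h'
    linarith
  have i0 : (0 : ℝ) ≤ i := by positivity
  rw [c1, c2] at hx3
  rw [c3, c4] at he3
  have hT2m : T2 ∈ VV k m n γ N := by
    have := Submodule.sub_mem _ (Submodule.smul_mem _ 3 he3)
      (Submodule.smul_mem _ ((i : ℝ) + 3) hx3)
    have e : (3 : ℝ) • ((((i : ℝ) + 3) * (i + 2) / 2) • T2 +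
        (((i : ℝ) + 3) * (i + 2) * (i + 1) / 6) • T3)
        - ((i : ℝ) + 3) • (((i : ℝ) + 2) • T2 + (((i : ℝ) + 2) * (i + 1) / 2) • T3)
        = (((i : ℝ) + 3) * (i + 2) / 2) • T2 := by module
    rw [e] at this
    exact (Submodule.smul_mem_iff _ (by positivity)).1 this
  refine ⟨hT2m, ?_⟩
  have := (Submodule.add_mem_iff_right _ (Submodule.smul_mem _ ((i : ℝ) + 2) hT2m)).1 hx3
  exact (Submodule.smul_mem_iff _ (by positivity)).1 this

/-- case `b^{2m} x^{2n}` -/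
lemma case_2 (hmn : m + n = k) (hm : 1 ≤ m) (hn : 1 ≤ n) {w : ℤ}
    (H : DD k m n N (w + 1) ≤ VV k m n γ N) (hN : N = k * 2) (hw : w = 0) :
    Mon 0 (2 * m) (2 * n) ∈ VV k m n γ N := by
  have h3 : (m : ℤ) + n = k := by exact_mod_cast hmn
  have t1 : Mon 1 m n ∈ VV k m n γ N :=
    key_beta hmn hm H 1 m 1 rfl (by rw [hN]; push_cast; linarith) (by rw [hw]; ring)
  have hx := key_xi hmn hn H 1 n 1 rfl (by rw [hN]; push_cast; linarith) (by rw [hw]; ring)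
  rw [Finset.sum_range_succ, Finset.sum_range_one] at hx
  simp only [Nat.choose_zero_right, Nat.choose_self, Nat.cast_one, one_smul] at hx
  have a1 : Mon (1 - 0) (m * (0 + 1)) (n * 0 + n) = Mon 1 m n := by congr 1 <;> ring
  rw [a1] at hx
  have := (Submodule.add_mem_iff_right _ t1).1 hx
  convert this using 2 <;> ring

lemma step_mon (hmn : m + n = k) (hm : 1 ≤ m) (hn : 1 ≤ n) {w : ℤ}
    (H : DD k m n N (w + 1) ≤ VV k m n γ N) (i j l : ℕ)
    (hN : N ≤ k * i + j + l) (hw : w ≤ n * j - m * l) : Mon i j l ∈ VV k m n γ N := by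
  rcases lt_or_eq_of_le hw with hw | hw
  · exact H (DD_Mon _ _ _ _ _ _ hN (by linarith))
  by_cases hS : SingNonNormal m n (ee i j l)
  swap
  · exact VV_Mon_nrm _ _ _ hN hS
  rcases lt_or_eq_of_le hN with hN | hN
  · refine VV_nrm ?_
    rw [Mon_eq]
    refine (monomial_mem_restrictSupport ℝ).2 (Or.inl ⟨?_, fun h => ?_⟩)
    · rw [weight_W1, ee0, ee1, ee2]; exact hN.le
    · rw [weight_W1, ee0, ee1, ee2] at h; omega
  by_cases hl : l = 0
  · subst hl
    exact VV_alpha _ _ (by rw [hN]; simp)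
  by_cases hj : j = 0
  · subst hj
    exact case_x hmn hm hn H i l (by omega) (by rw [hN]; simp) (by rw [hw]; simp)
  by_cases hln : l = n ∧ m - 1 ≤ j
  · obtain ⟨rfl, h⟩ := hln
    exact key_beta hmn hm H i j (j + 1 - m) (by omega) hN hw
  by_cases hjm : j = m ∧ n - 1 ≤ l
  · obtain ⟨rfl, h⟩ := hjm
    exact case_m hmn hm hn H i l (l + 1 - n) (by omega) (by omega) hl hN hw
  have h3 : (m : ℤ) + n = k := by exact_mod_cast hmn
  unfold SingNonNormal at hS
  simp only [ee1, ee2] at hS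
  have hS' : (j = 2 * m ∧ l = 2 * n) ∨ (j = 3 * m ∧ l = 3 * n) := by omega
  rcases hS' with ⟨rfl, rfl⟩ | ⟨rfl, rfl⟩
  · have hw0 : w = 0 := by rw [hw]; push_cast; ring
    rcases i with _ | i
    · exact case_2 hmn hm hn H (by rw [hN]; push_cast; linarith) hw0
    · exact (case_23 hmn hm hn H i (by rw [hN]; push_cast; linarith) hw0).1
  · have hw0 : w = 0 := by rw [hw]; push_cast; ring
    exact (case_23 hmn hm hn H i (by rw [hN]; push_cast; linarith) hw0).2

lemma mem_of_Mon {S : Submodule ℝ (MvPolynomial (Fin 3) ℝ)} {p : MvPolynomial (Fin 3) ℝ}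
    (h : ∀ d ∈ p.support, Mon (d 0) (d 1) (d 2) ∈ S) : p ∈ S := by
  rw [p.as_sum]
  refine Submodule.sum_mem _ fun d hd => ?_
  have hd' : ee (d 0) (d 1) (d 2) = d := by
    ext i; fin_cases i
    · exact ee0 _ _ _
    · exact ee1 _ _ _
    · exact ee2 _ _ _
  have := Submodule.smul_mem _ (coeff d p) (h d hd)
  rw [Mon_eq, hd', smul_monomial, smul_eq_mul, mul_one] at this
  exact this

lemma DD_le_VV (hmn : m + n = k) (hm : 1 ≤ m) (hn : 1 ≤ n) (t : ℕ) :
    DD k m n N (n * N + 1 - t) ≤ VV k m n γ N := by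
  induction t with
  | zero =>
    intro p hp
    refine mem_of_Mon fun d hd => ?_
    have h1 := OO_mem.1 hp.1 d hd
    have h2 := OO_mem.1 hp.2 d hd
    rw [weight_W1] at h1
    rw [weight_W2] at h2
    refine VV_nrm ?_
    rw [Mon_eq]
    refine (monomial_mem_restrictSupport ℝ).2 (Or.inl ⟨?_, fun h => ?_⟩)
    · rw [weight_W1, ee0, ee1, ee2]; exact h1
    · rw [weight_W1, ee0, ee1, ee2] at h
      exfalso
      have a1 : (0 : ℤ) ≤ m * d 2 := by positivity
      have a2 : (0 : ℤ) ≤ n * (k * d 0 + d 2) := by positivity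
      rw [← h] at h2
      push_cast at h2
      nlinarith
  | succ t ih =>
    intro p hp
    refine mem_of_Mon fun d hd => ?_
    have h1 := OO_mem.1 hp.1 d hd
    have h2 := OO_mem.1 hp.2 d hd
    rw [weight_W1] at h1
    rw [weight_W2] at h2
    refine step_mon hmn hm hn (w := n * N + 1 - (t + 1 : ℕ)) ?_ _ _ _ h1 h2
    convert ih using 2
    push_cast; ring

lemma OO_le_VV (hmn : m + n = k) (hm : 1 ≤ m) (hn : 1 ≤ n) :
    OO (W1 k) N ≤ VV k m n γ N := by
  intro p hp
  refine mem_of_Mon fun d hd => ?_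
  have h1 := OO_mem.1 hp d hd
  rw [weight_W1] at h1
  refine DD_le_VV hmn hm hn (n * N + 1 - (n * d 1 - m * d 2)).toNat (DD_Mon _ _ _ _ _ _ h1 ?_)
  have := Int.self_le_toNat (n * N + 1 - (n * d 1 - m * d 2))
  linarith

end linear

section main

/-- the full jet -/
noncomputable def FF (k m n ℓ : ℕ) (γ : ℕ → ℝ) (P : ℕ → MvPolynomial (Fin 3) ℝ) :
    MvPolynomial (Fin 3) ℝ := F0 k m n γ + ∑ ν ∈ Finset.Icc (k + 1) ℓ, P ν

/-- the transformed defining equation -/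
noncomputable def Err (k m n : ℕ) (γ : ℕ → ℝ) (F : MvPolynomial (Fin 3) ℝ)
    (ξ η α β : MvPolynomial (Fin 2) ℝ) (Ps : ℕ → MvPolynomial (Fin 3) ℝ) (N : ℕ) :
    MvPolynomial (Fin 3) ℝ :=
  F + aeval ![(X 2 : MvPolynomial (Fin 3) ℝ), F] η -
    (X 0 + aeval ![(X 0 : MvPolynomial (Fin 3) ℝ), X 1] α +
      QQ k m n γ (X 1 + aeval ![(X 0 : MvPolynomial (Fin 3) ℝ), X 1] β)
        (X 2 + aeval ![(X 2 : MvPolynomial (Fin 3) ℝ), F] ξ) +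
      ∑ ν ∈ Finset.Icc (k + 1) N, aeval ![X 0 + aeval ![(X 0 : MvPolynomial (Fin 3) ℝ), X 1] α,
        X 1 + aeval ![(X 0 : MvPolynomial (Fin 3) ℝ), X 1] β,
        X 2 + aeval ![(X 2 : MvPolynomial (Fin 3) ℝ), F] ξ] (Ps ν))

lemma QQ_JJ (k m n : ℕ) (hmn : m + n = k) (γ : ℕ → ℝ) {s : ℤ} (hs : 1 ≤ s)
    {B B' Y Y' D E : MvPolynomial (Fin 3) ℝ}
    (hB : JJ (W1 k) s 1 B B' (X 1) D) (hY : JJ (W1 k) s 1 Y Y' (X 2) E) :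
    QQ k m n γ B' Y' - QQ k m n γ B Y - (Qb k m n γ * D + Qx k m n γ * E)
      ∈ OO (W1 k) (k + s + 1) := by
  have h1 : ∀ j l : ℕ, j + l = k → JJ (W1 k) s k (B ^ j * Y ^ l) (B' ^ j * Y' ^ l)
      (X 1 ^ j * X 2 ^ l) (X 1 ^ j * (C (l : ℝ) * X 2 ^ (l - 1) * E) +
        X 2 ^ l * (C (j : ℝ) * X 1 ^ (j - 1) * D)) := by
    intro j l hjl
    have := (hB.pow hs j).mul hs (hY.pow hs l)
    have h2 : (j : ℤ) * 1 + l * 1 = k := by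
      rw [mul_one, mul_one]; exact_mod_cast hjl
    rwa [h2] at this
  have h2 := (h1 m n hmn).add (JJ.sum (Finset.Icc (m + 1) (k - 1)) _ _ _ _
    fun j hj => (h1 j (k - j) (by rw [Finset.mem_Icc] at hj; omega)).smul (γ j))
  convert h2.h3 using 1
  simp only [QQ, Qb, Qx, add_mul, Finset.sum_mul, mul_assoc]
  simp only [mul_add, Finset.sum_add_distrib]
  have e1 : ∀ j, C (γ j) * (C ((k - j : ℕ) : ℝ) * (X 1 ^ j * (X 2 ^ (k - j - 1) * E)))
      = C (γ j) * (X 1 ^ j * (C ((k - j : ℕ) : ℝ) * (X 2 ^ (k - j - 1) * E))) := by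
    intro j; ring
  have e2 : ∀ j : ℕ, C (γ j) * (C (j : ℝ) * (X 1 ^ (j - 1) * (X 2 ^ (k - j) * D)))
      = C (γ j) * (X 2 ^ (k - j) * (C (j : ℝ) * (X 1 ^ (j - 1) * D))) := by
    intro j; ring
  rw [Finset.sum_congr rfl fun j _ => e1 j, Finset.sum_congr rfl fun j _ => e2 j]
  ring

lemma hom_OO {k : ℕ} {ν : ℕ} {p : MvPolynomial (Fin 3) ℝ}
    (h : p.IsWeightedHomogeneous (![k, 1, 1] : Fin 3 → ℕ) ν) : p ∈ OO (W1 k) ν := by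
  rw [OO_mem]
  intro d hd
  have := h (mem_support_iff.1 hd)
  rw [Finsupp.weight_eq_sum, Fin.sum_univ_three] at this
  simp at this
  rw [weight_W1, ← this]
  push_cast
  linarith [mul_comm (k : ℤ) (d 0)]

lemma weight_nat (k : ℕ) (d : Fin 3 →₀ ℕ) :
    Finsupp.weight (W1 k) d = (Finsupp.weight (![k, 1, 1] : Fin 3 → ℕ) d : ℕ) := by
  rw [weight_W1, Finsupp.weight_eq_sum, Fin.sum_univ_three]
  simp [mul_comm]

lemma main_ind (k m n ℓ : ℕ) (hk : 2 < k) (hm : 1 ≤ m) (hn : 1 ≤ n)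
    (hmn : m + n = k) (γ : ℕ → ℝ) (P : ℕ → MvPolynomial (Fin 3) ℝ)
    (hP : ∀ ν ∈ Finset.Icc (k + 1) ℓ,
      (P ν).IsWeightedHomogeneous (![k, 1, 1] : Fin 3 → ℕ) ν) (N : ℕ) (hkN : k ≤ N) (hN : N ≤ ℓ) :
    ∃ ξ ∈ OO (Wxy k) 2, ∃ η ∈ OO (Wxy k) (k + 1), ∃ α ∈ OO (Wab k) (k + 1), ∃ β ∈ OO (Wab k) 2,
      ∃ Ps : ℕ → MvPolynomial (Fin 3) ℝ,
        (∀ ν ∈ Finset.Icc (k + 1) N,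
          (Ps ν).IsWeightedHomogeneous (![k, 1, 1] : Fin 3 → ℕ) ν ∧
          ∀ d ∈ (Ps ν).support, ¬ SingNonNormal m n d) ∧
        Err k m n γ (FF k m n ℓ γ P) ξ η α β Ps N ∈ OO (W1 k) (N + 1) := by
  set F := FF k m n ℓ γ P with hFdef
  have hF1 : F - F0 k m n γ ∈ OO (W1 k) (k + 1) := by
    rw [hFdef, FF, add_sub_cancel_left]
    refine Submodule.sum_mem _ fun ν hν => OO_mono ?_ (hom_OO (hP ν hν))
    rw [Finset.mem_Icc] at hν
    exact_mod_cast hν.1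
  have hF0 : F0 k m n γ ∈ OO (W1 k) k := by
    have := (F0_DD k m n γ hmn 1).1.1
    simpa using this
  have hF : F ∈ OO (W1 k) k := by
    simpa using Submodule.add_mem _ (OO_mono (by linarith) hF1) hF0
  have x0 : (X 0 : MvPolynomial (Fin 3) ℝ) ∈ OO (W1 k) k := OO_X 0
  have x1 : (X 1 : MvPolynomial (Fin 3) ℝ) ∈ OO (W1 k) 1 := OO_X 1
  have x2 : (X 2 : MvPolynomial (Fin 3) ℝ) ∈ OO (W1 k) 1 := OO_X 2
  have uF : ∀ i, (![(X 2 : MvPolynomial (Fin 3) ℝ), F]) i ∈ OO (W1 k) (Wxy k i) := by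
    intro i; fin_cases i
    · exact x2
    · exact hF
  have uF0 : ∀ i, (![(X 2 : MvPolynomial (Fin 3) ℝ), F0 k m n γ]) i ∈ OO (W1 k) (Wxy k i) := by
    intro i; fin_cases i
    · exact x2
    · exact hF0
  have uFF : ∀ i, (![(X 2 : MvPolynomial (Fin 3) ℝ), F]) i -
      (![(X 2 : MvPolynomial (Fin 3) ℝ), F0 k m n γ]) i ∈ OO (W1 k) (Wxy k i + 1) := by
    intro i; fin_cases i
    · simp
    · exact hF1
  have uab : ∀ i, (![(X 0 : MvPolynomial (Fin 3) ℝ), X 1]) i ∈ OO (W1 k) (Wab k i) := by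
    intro i; fin_cases i
    · exact x0
    · exact x1
  induction N, hkN using Nat.le_induction with
  | base =>
    refine ⟨0, Submodule.zero_mem _, 0, Submodule.zero_mem _, 0, Submodule.zero_mem _, 0,
      Submodule.zero_mem _, 0, ?_, ?_⟩
    · intro ν hν
      simp at hν
    · have : Err k m n γ F 0 0 0 0 0 k = F - F0 k m n γ := by
        simp [Err, F0]
      rw [this]
      exact hF1
  | succ N hkN ih =>
    obtain ⟨ξ, hξ, η, hη, α, hα, β, hβ, Ps, hPs, hE⟩ := ih (by omega)
    have hkN' : (k : ℤ) ≤ N := by exact_mod_cast hkN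
    obtain ⟨η', hη', α', hα', β', hβ', ξ', hξ', R, hR, hER⟩ :=
      VV_mem k m n γ (OO_le_VV (γ := γ) hmn hm hn hE)
    set R' := weightedHomogeneousComponent (![k, 1, 1] : Fin 3 → ℕ) (N + 1) R with hR'
    have hR'hom : R'.IsWeightedHomogeneous (![k, 1, 1] : Fin 3 → ℕ) (N + 1) :=
      weightedHomogeneousComponent_isWeightedHomogeneous _ _
    have hRsupp : ∀ d ∈ R.support, (N : ℤ) + 1 ≤ Finsupp.weight (W1 k) d ∧
        (Finsupp.weight (W1 k) d = N + 1 → ¬ SingNonNormal m n d) := fun d hd =>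
      (mem_restrictSupport_iff ℝ).1 hR hd
    have hR'nf : ∀ d ∈ R'.support, ¬ SingNonNormal m n d := by
      intro d hd
      rw [mem_support_iff, hR', coeff_weightedHomogeneousComponent] at hd
      split_ifs at hd with hw
      · refine (hRsupp d (mem_support_iff.2 hd)).2 ?_
        rw [weight_nat, hw]; push_cast; rfl
      · exact absurd rfl hd
    have hRR' : R - R' ∈ OO (W1 k) (N + 1 + 1) := by
      rw [OO_mem]
      intro d hd
      rw [mem_support_iff, coeff_sub, hR', coeff_weightedHomogeneousComponent] at hd
      split_ifs at hd with hw
      · simp at hd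
      · rw [sub_zero] at hd
        have h1 := (hRsupp d (mem_support_iff.2 hd)).1
        rw [weight_nat] at h1 ⊢
        have h2 : N + 1 ≤ Finsupp.weight (![k, 1, 1] : Fin 3 → ℕ) d := by exact_mod_cast h1
        have h3 : N + 1 + 1 ≤ Finsupp.weight (![k, 1, 1] : Fin 3 → ℕ) d := by omega
        exact_mod_cast h3
    set Ps' : ℕ → MvPolynomial (Fin 3) ℝ := fun ν => if ν = N + 1 then R' else Ps ν with hPs'
    have m1 : ξ + ξ' ∈ OO (Wxy k) 2 := Submodule.add_mem _ hξ (OO_mono (by linarith) hξ')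
    have m2 : η - η' ∈ OO (Wxy k) (k + 1) := Submodule.sub_mem _ hη (OO_mono (by linarith) hη')
    have m3 : α + α' ∈ OO (Wab k) (k + 1) := Submodule.add_mem _ hα (OO_mono (by linarith) hα')
    have m4 : β + β' ∈ OO (Wab k) 2 := Submodule.add_mem _ hβ (OO_mono (by linarith) hβ')
    refine ⟨ξ + ξ', m1, η - η', m2, α + α', m3, β + β', m4, Ps', ?_, ?_⟩
    · intro ν hν
      rw [Finset.mem_Icc] at hν
      by_cases h : ν = N + 1
      · subst h
        simp only [hPs', if_true]
        exact ⟨hR'hom, hR'nf⟩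
      · simp only [hPs', if_neg h]
        exact hPs ν (Finset.mem_Icc.2 ⟨hν.1, by omega⟩)
    -- the new error term
    set tab := (aeval ![(X 0 : MvPolynomial (Fin 3) ℝ), X 1] :
      MvPolynomial (Fin 2) ℝ →ₐ[ℝ] MvPolynomial (Fin 3) ℝ) with htab
    set tF := (aeval ![(X 2 : MvPolynomial (Fin 3) ℝ), F] :
      MvPolynomial (Fin 2) ℝ →ₐ[ℝ] MvPolynomial (Fin 3) ℝ) with htF
    set tF0 := (aeval ![(X 2 : MvPolynomial (Fin 3) ℝ), F0 k m n γ] :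
      MvPolynomial (Fin 2) ℝ →ₐ[ℝ] MvPolynomial (Fin 3) ℝ) with htF0
    set A := X 0 + tab α with hA
    set B := X 1 + tab β with hB
    set Y := X 2 + tF ξ with hY
    set A' := X 0 + tab (α + α') with hA'
    set B' := X 1 + tab (β + β') with hB'
    set Y' := X 2 + tF (ξ + ξ') with hY'
    have a1 : tab α' ∈ OO (W1 k) (N + 1) := OO_aeval hα' uab
    have b1 : tab β' ∈ OO (W1 k) (N + 1 - k + 1) := OO_aeval hβ' uab
    have c1 : tF ξ' ∈ OO (W1 k) (N + 1 - k + 1) := OO_aeval hξ' uF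
    have c2 : tF0 ξ' ∈ OO (W1 k) (N + 1 - k + 1) := OO_aeval hξ' uF0
    have c3 : tF ξ' - tF0 ξ' ∈ OO (W1 k) (N + 1 - k + 1 + 1) :=
      OO_aeval_sub hξ' uF uF0 uFF (by linarith)
    have c4 : tF η' - tF0 η' ∈ OO (W1 k) (N + 1 + 1) :=
      OO_aeval_sub hη' uF uF0 uFF (by linarith)
    have a2 : tab α ∈ OO (W1 k) (k + 1) := OO_aeval hα uab
    have b2 : tab β ∈ OO (W1 k) 2 := OO_aeval hβ uab
    have d2 : tF ξ ∈ OO (W1 k) 2 := OO_aeval hξ uF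
    have a3 : tab (α + α') ∈ OO (W1 k) (k + 1) := OO_aeval m3 uab
    have b3 : tab (β + β') ∈ OO (W1 k) 2 := OO_aeval m4 uab
    have d3 : tF (ξ + ξ') ∈ OO (W1 k) 2 := OO_aeval m1 uF
    have jB : JJ (W1 k) (N + 1 - k) 1 B B' (X 1) (tab β') := by
      refine ⟨x1, ?_, OO_mono (by linarith) b1, ?_⟩
      · rw [hB, add_sub_cancel_left]; exact b2
      · have : B' - B - tab β' = 0 := by rw [hB, hB', map_add]; ring
        rw [this]; exact Submodule.zero_mem _
    have jY : JJ (W1 k) (N + 1 - k) 1 Y Y' (X 2) (tF0 ξ') := by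
      refine ⟨x2, ?_, OO_mono (by linarith) c2, ?_⟩
      · rw [hY, add_sub_cancel_left]; exact d2
      · have : Y' - Y - tF0 ξ' = tF ξ' - tF0 ξ' := by rw [hY, hY', map_add]; ring
        rw [this]; exact OO_mono (by linarith) c3
    have hQ := QQ_JJ k m n hmn γ (by linarith) jB jY
    have vX : ∀ i, (X : Fin 3 → MvPolynomial (Fin 3) ℝ) i ∈ OO (W1 k) (W1 k i) := fun i => OO_X i
    have pA : A ∈ OO (W1 k) k := Submodule.add_mem _ x0 (OO_mono (by linarith) a2)
    have pB : B ∈ OO (W1 k) 1 := Submodule.add_mem _ x1 (OO_mono (by linarith) b2)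
    have pY : Y ∈ OO (W1 k) 1 := Submodule.add_mem _ x2 (OO_mono (by linarith) d2)
    have vA : ∀ i, (![A, B, Y]) i ∈ OO (W1 k) (W1 k i) := by
      intro i; fin_cases i
      · exact pA
      · exact pB
      · exact pY
    have qA : A' ∈ OO (W1 k) k := Submodule.add_mem _ x0 (OO_mono (by linarith) a3)
    have qB : B' ∈ OO (W1 k) 1 := Submodule.add_mem _ x1 (OO_mono (by linarith) b3)
    have qY : Y' ∈ OO (W1 k) 1 := Submodule.add_mem _ x2 (OO_mono (by linarith) d3)
    have vA' : ∀ i, (![A', B', Y']) i ∈ OO (W1 k) (W1 k i) := by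
      intro i; fin_cases i
      · exact qA
      · exact qB
      · exact qY
    have vd : ∀ i, (![A', B', Y']) i - (![A, B, Y]) i ∈ OO (W1 k) (W1 k i + (N + 1 - k)) := by
      intro i; fin_cases i
      · have : A' - A = tab α' := by rw [hA, hA', map_add]; ring
        simp only [Fin.zero_eta, Matrix.cons_val_zero, this]
        refine OO_mono ?_ a1
        simp [W1]
      · have : B' - B = tab β' := by rw [hB, hB', map_add]; ring
        simp only [Fin.mk_one, Matrix.cons_val_one, Matrix.cons_val_zero, this]
        refine OO_mono ?_ b1
        simp [W1]; linarith
      · have : Y' - Y = tF ξ' := by rw [hY, hY', map_add]; ring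
        have h2 : (![A', B', Y']) 2 - (![A, B, Y]) 2 = tF ξ' := this
        change (![A', B', Y']) 2 - (![A, B, Y]) 2 ∈ _
        rw [h2]
        refine OO_mono ?_ c1
        simp [W1]; linarith
    have vdX : ∀ i, (![A', B', Y']) i - X i ∈ OO (W1 k) (W1 k i + 1) := by
      intro i; fin_cases i
      · have : A' - X 0 = tab (α + α') := by rw [hA']; ring
        change A' - X 0 ∈ _
        rw [this]; exact a3
      · have : B' - X 1 = tab (β + β') := by rw [hB']; ring
        change B' - X 1 ∈ _
        rw [this]; exact b3
      · have : Y' - X 2 = tF (ξ + ξ') := by rw [hY']; ring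
        change Y' - X 2 ∈ _
        rw [this]; exact d3
    have hR1 : aeval ![A', B', Y'] R' - R' ∈ OO (W1 k) (N + 1 + 1) := by
      have h1 : R' ∈ OO (W1 k) (N + 1) := by
        have := hom_OO hR'hom
        push_cast at this; exact this
      have := OO_aeval_sub h1 vA' vX vdX le_rfl
      rwa [aeval_X_left_apply] at this
    have hS : ∑ ν ∈ Finset.Icc (k + 1) N,
        (aeval ![A', B', Y'] (Ps ν) - aeval ![A, B, Y] (Ps ν)) ∈ OO (W1 k) (N + 1 + 1) := by
      refine Submodule.sum_mem _ fun ν hν => ?_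
      refine OO_aeval_sub (hom_OO (hPs ν hν).1) vA' vA vd ?_
      rw [Finset.mem_Icc] at hν
      have : (k : ℤ) + 1 ≤ ν := by exact_mod_cast hν.1
      linarith
    have hsum : ∑ ν ∈ Finset.Icc (k + 1) (N + 1), aeval ![A', B', Y'] (Ps' ν) =
        ∑ ν ∈ Finset.Icc (k + 1) N, aeval ![A', B', Y'] (Ps ν) + aeval ![A', B', Y'] R' := by
      rw [Finset.sum_Icc_succ_top (by omega)]
      congr 1
      · refine Finset.sum_congr rfl fun ν hν => ?_
        rw [Finset.mem_Icc] at hν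
        simp only [hPs']
        rw [if_neg (by omega)]
      · simp [hPs']
    have e0 : Err k m n γ F ξ η α β Ps N = F + tF η - (A + QQ k m n γ B Y +
        ∑ ν ∈ Finset.Icc (k + 1) N, aeval ![A, B, Y] (Ps ν)) := rfl
    have e1 : Err k m n γ F (ξ + ξ') (η - η') (α + α') (β + β') Ps' (N + 1) =
        F + tF (η - η') - (A' + QQ k m n γ B' Y' +
        ∑ ν ∈ Finset.Icc (k + 1) (N + 1), aeval ![A', B', Y'] (Ps' ν)) := rfl
    have e2 : Err k m n γ F (ξ + ξ') (η - η') (α + α') (β + β') Ps' (N + 1) =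
        (R - R') - (aeval ![A', B', Y'] R' - R') - (tF η' - tF0 η') -
        (QQ k m n γ B' Y' - QQ k m n γ B Y - (Qb k m n γ * tab β' + Qx k m n γ * tF0 ξ')) -
        ∑ ν ∈ Finset.Icc (k + 1) N,
          (aeval ![A', B', Y'] (Ps ν) - aeval ![A, B, Y] (Ps ν)) := by
      rw [e1, hsum, Finset.sum_sub_distrib]
      rw [e0] at hER
      have hAA : A' = A + tab α' := by rw [hA, hA', map_add]; ring
      rw [map_sub, hAA]
      rw [hAA] at *
      linear_combination hER
    rw [e2]
    push_cast
    refine Submodule.sub_mem _ (Submodule.sub_mem _ (Submodule.sub_mem _ (Submodule.sub_mem _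
      hRR' hR1) c4) (OO_mono (by linarith) hQ)) hS

end main

/-- Every weighted `ℓ`-jet
`F_ℓ = a + b^m x^n + Σ_{j=m+1}^{k−1} γ_j b^j x^{k−j} + Σ_{ν=k+1}^{ℓ} P_ν`
of a finite type hypersurface can be taken into normal form of order `ℓ` with
respect to `b^m x^n` by a triangular polynomial change of coordinates
`X = x + ξ(x,y)`, `Y = y + η(x,y)`, `A = a + α(a,b)`, `B = b + β(a,b)`:
after substituting `y = F_ℓ`, the defining equation of the transformed
hypersurface agrees with
`A + B^m X^n + Σ_j γ_j B^j X^{k−j} + Σ_ν P*_ν(A,B,X)` up to terms of weighted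
degree `> ℓ`, where each `P*_ν` is weighted homogeneous of weight `ν` and
contains no monomial of the excluded types. -/
theorem stmt8 (k m n ℓ : ℕ) (hk : 2 < k) (hm : 1 ≤ m) (hn : 1 ≤ n)
    (hmn : m + n = k) (hℓ : k < ℓ) (γ : ℕ → ℝ) (P : ℕ → MvPolynomial (Fin 3) ℝ)
    (hP : ∀ ν ∈ Finset.Icc (k + 1) ℓ,
      (P ν).IsWeightedHomogeneous (![k, 1, 1] : Fin 3 → ℕ) ν) :
    ∃ ξ η α β : MvPolynomial (Fin 2) ℝ,
      (∀ d ∈ ξ.support, 2 ≤ d 0 + k * d 1) ∧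
      (∀ d ∈ η.support, 2 ≤ d 0 + k * d 1) ∧
      (∀ d ∈ α.support, 2 ≤ k * d 0 + d 1) ∧
      (∀ d ∈ β.support, 2 ≤ k * d 0 + d 1) ∧
      ∃ Ps : ℕ → MvPolynomial (Fin 3) ℝ,
        (∀ ν ∈ Finset.Icc (k + 1) ℓ,
          (Ps ν).IsWeightedHomogeneous (![k, 1, 1] : Fin 3 → ℕ) ν ∧
          ∀ d ∈ (Ps ν).support, ¬ SingNonNormal m n d) ∧
        (let Fl : MvPolynomial (Fin 3) ℝ :=
          X 0 + X 1 ^ m * X 2 ^ n +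
            (∑ j ∈ Finset.Icc (m + 1) (k - 1), C (γ j) * X 1 ^ j * X 2 ^ (k - j)) +
            ∑ ν ∈ Finset.Icc (k + 1) ℓ, P ν
        let A : MvPolynomial (Fin 3) ℝ := X 0 + aeval ![(X 0 : MvPolynomial (Fin 3) ℝ), X 1] α
        let B : MvPolynomial (Fin 3) ℝ := X 1 + aeval ![(X 0 : MvPolynomial (Fin 3) ℝ), X 1] β
        let Xc : MvPolynomial (Fin 3) ℝ := X 2 + aeval ![(X 2 : MvPolynomial (Fin 3) ℝ), Fl] ξ
        let Yc : MvPolynomial (Fin 3) ℝ := Fl + aeval ![(X 2 : MvPolynomial (Fin 3) ℝ), Fl] η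
        ∀ d ∈ (Yc - (A + B ^ m * Xc ^ n +
            (∑ j ∈ Finset.Icc (m + 1) (k - 1), C (γ j) * B ^ j * Xc ^ (k - j)) +
            ∑ ν ∈ Finset.Icc (k + 1) ℓ, aeval ![A, B, Xc] (Ps ν))).support,
          ℓ < k * d 0 + d 1 + d 2) := by
  obtain ⟨ξ, hξ, η, hη, α, hα, β, hβ, Ps, hPs, hE⟩ := main_ind k m n ℓ hk hm hn hmn γ P hP ℓ hℓ.le
    le_rfl
  refine ⟨ξ, η, α, β, ?_, ?_, ?_, ?_, Ps, hPs, ?_⟩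
  · intro d hd
    have := OO_mem.1 hξ d hd
    rw [weight_Wxy] at this
    exact_mod_cast this
  · intro d hd
    have := OO_mem.1 hη d hd
    rw [weight_Wxy] at this
    have h : k + 1 ≤ d 0 + k * d 1 := by exact_mod_cast this
    omega
  · intro d hd
    have := OO_mem.1 hα d hd
    rw [weight_Wab] at this
    have h : k + 1 ≤ k * d 0 + d 1 := by exact_mod_cast this
    omega
  · intro d hd
    have := OO_mem.1 hβ d hd
    rw [weight_Wab] at this
    exact_mod_cast this
  · intro Fl A B Xc Yc d hd
    have hFl : Fl = FF k m n ℓ γ P := by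
      simp only [Fl, FF, F0, QQ]
      ring
    have e : Yc - (A + B ^ m * Xc ^ n +
            (∑ j ∈ Finset.Icc (m + 1) (k - 1), C (γ j) * B ^ j * Xc ^ (k - j)) +
            ∑ ν ∈ Finset.Icc (k + 1) ℓ, aeval ![A, B, Xc] (Ps ν)) =
        Err k m n γ (FF k m n ℓ γ P) ξ η α β Ps ℓ := by
      simp only [Err, Yc, A, B, Xc, QQ, hFl]
      ring
    rw [e] at hd
    have := OO_mem.1 hE d hd
    rw [weight_W1] at this
    have h : ℓ + 1 ≤ k * d 0 + d 1 + d 2 := by exact_mod_cast this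
    omega
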